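/- Fix a network architecture (n₀,…,n_m,1) with total parameter count D. There exists a nonzero polynomial P in the n₀ + D variables (x, s) such that the parametrized ReLU network family 𝓕: ℝ^{n₀} × ℝ^D → ℝ, sending (x, s) to the output of the architecture with weights/biases s evaluated at input x, is smooth (locally polynomial) on the complement of the zero set of P. In particular, 𝓕 is smooth outside a closed Lebesgue-null set. -/

import Mathlib

/-!
A ReLU network is a *continuous selection* of finitely many polynomial functions of `(x, s)`: it is
continuous, and at every point its value is that of one of finitely many polynomials. Continuous
selections are closed under sums, products and maxima, which is all a ReLU network is built from.
If `f` is a continuous selection of `q₁, …, q_N`, take for `P` the product of the differences of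
the distinct `qᵢ`. Where `P` does not vanish the `qᵢ` take distinct values, so near such a point
the continuous function `f` cannot jump from one `qᵢ` to another and coincides with one of them.
-/

open Matrix

/-- The composition of the first `k` ReLU layer maps of a feedforward network with layer
dimensions `d 0, d 1, d 2, …`, weight matrices `W` and biases `b`. -/
def forward (d : ℕ → ℕ) (W : ∀ k, Matrix (Fin (d (k + 1))) (Fin (d k)) ℝ)
    (b : ∀ k, Fin (d (k + 1)) → ℝ) : (k : ℕ) → (Fin (d 0) → ℝ) → Fin (d k) → ℝ
  | 0, x => x
  | k + 1, x => fun i => max ((W k).mulVec (forward d W b k x) i + b k i) 0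

/-- The parameter space of the architecture `(d 0, …, d m, 1)`: all weight matrices and
bias vectors of the `m` hidden layers together with the weights and bias of the final
affine map.  (A finite-dimensional real vector space of dimension `D(d 0,…,d m,1)`.) -/
abbrev ParamSpace (d : ℕ → ℕ) (m : ℕ) : Type :=
  (∀ k : Fin m, Fin (d (k.1 + 1)) → Fin (d k.1) → ℝ) ×
  (∀ k : Fin m, Fin (d (k.1 + 1)) → ℝ) × (Fin (d m) → ℝ) × ℝ

/-- The parametrized family of ReLU networks of architecture `(d 0, …, d m, 1)`,
as a function of the pair (input, parameter). -/
noncomputable def netFamily (d : ℕ → ℕ) (m : ℕ)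
    (z : (Fin (d 0) → ℝ) × ParamSpace d m) : ℝ :=
  z.2.2.2.1 ⬝ᵥ forward d
    (fun k => if h : k < m then Matrix.of (z.2.1 ⟨k, h⟩) else 0)
    (fun k => if h : k < m then z.2.2.1 ⟨k, h⟩ else 0) m z.1 + z.2.2.2.2

/-- A real polynomial function on a real vector space: an element of the subalgebra of
functions generated by the linear functionals (for `E = ℝ^{n₀} × ℝ^D` these are exactly
the polynomials in the `n₀ + D` coordinate variables). -/
def IsPolyFun {E : Type*} [AddCommGroup E] [Module ℝ E] (g : E → ℝ) : Prop :=
  g ∈ Algebra.adjoin ℝ {f : E → ℝ | IsLinearMap ℝ f}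

open Filter MeasureTheory Topology

namespace IsPolyFun

section Algebra

variable {E : Type*} [AddCommGroup E] [Module ℝ E] {f g : E → ℝ}

theorem of_isLinearMap (hf : IsLinearMap ℝ f) : IsPolyFun f :=
  Algebra.subset_adjoin hf

theorem algebraMap (r : ℝ) : IsPolyFun (algebraMap ℝ (E → ℝ) r) :=
  Subalgebra.algebraMap_mem _ r

theorem add (hf : IsPolyFun f) (hg : IsPolyFun g) : IsPolyFun (f + g) :=
  Subalgebra.add_mem _ hf hg

theorem sub (hf : IsPolyFun f) (hg : IsPolyFun g) : IsPolyFun (f - g) :=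
  Subalgebra.sub_mem _ hf hg

theorem mul (hf : IsPolyFun f) (hg : IsPolyFun g) : IsPolyFun (f * g) :=
  Subalgebra.mul_mem _ hf hg

theorem exists_polynomial_eval_eq_on_line (hg : IsPolyFun g) (a v : E) :
    ∃ p : Polynomial ℝ, ∀ t : ℝ, g (a + t • v) = p.eval t := by
  unfold IsPolyFun at hg
  induction hg using Algebra.adjoin_induction with
  | mem f hf =>
    refine ⟨.C (f a) + .C (f v) * .X, fun t => ?_⟩
    simp [hf.map_add, hf.map_smul, mul_comm t]
  | algebraMap r => exact ⟨.C r, fun t => by simp⟩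
  | add f g _ _ ihf ihg =>
    obtain ⟨p, hp⟩ := ihf
    obtain ⟨q, hq⟩ := ihg
    exact ⟨p + q, fun t => by simp [hp, hq]⟩
  | mul f g _ _ ihf ihg =>
    obtain ⟨p, hp⟩ := ihf
    obtain ⟨q, hq⟩ := ihg
    exact ⟨p * q, fun t => by simp [hp, hq]⟩

theorem finite_setOf_line_eq_zero (hg : IsPolyFun g) {a v : E} {t₀ : ℝ} (h : g (a + t₀ • v) ≠ 0) :
    {t : ℝ | g (a + t • v) = 0}.Finite := by
  obtain ⟨p, hp⟩ := hg.exists_polynomial_eval_eq_on_line a v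
  have hp0 : p ≠ 0 := by
    rintro rfl
    simp [hp] at h
  simpa only [hp] using! Polynomial.finite_setOfPred_isRoot hp0

theorem mul_ne_zero (hf : IsPolyFun f) (hg : IsPolyFun g) (hf0 : f ≠ 0) (hg0 : g ≠ 0) :
    f * g ≠ 0 := by
  obtain ⟨a, ha⟩ := Function.ne_iff.1 hf0
  obtain ⟨b, hb⟩ := Function.ne_iff.1 hg0
  have hf_line : {t : ℝ | f (a + t • (b - a)) = 0}.Finite :=
    hf.finite_setOf_line_eq_zero (t₀ := 0) (by simpa using ha)
  have hg_line : {t : ℝ | g (a + t • (b - a)) = 0}.Finite :=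
    hg.finite_setOf_line_eq_zero (t₀ := 1) (by simpa using hb)
  obtain ⟨t, ht⟩ := (hf_line.union hg_line).infinite_compl.nonempty
  refine Function.ne_iff.2 ⟨a + t • (b - a), ?_⟩
  simpa using ht

theorem exists_ne_zero_forall_injOn_eval {S : Set (E → ℝ)} (hS : S.Finite)
    (hpoly : ∀ q ∈ S, IsPolyFun q) :
    ∃ P : E → ℝ, IsPolyFun P ∧ P ≠ 0 ∧ ∀ z, P z ≠ 0 → S.InjOn (Function.eval z) := by
  classical
  let P : E → ℝ := ∏ pq ∈ hS.toFinset.offDiag, (pq.1 - pq.2)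
  have hP : IsPolyFun P ∧ P ≠ 0 := by
    refine Finset.prod_induction _ (fun g : E → ℝ => IsPolyFun g ∧ g ≠ 0)
      (fun f g hf hg => ⟨hf.1.mul hg.1, hf.1.mul_ne_zero hg.1 hf.2 hg.2⟩)
      ⟨Subalgebra.one_mem _, one_ne_zero⟩ fun pq hpq => ?_
    obtain ⟨hp, hq, hne⟩ : pq.1 ∈ S ∧ pq.2 ∈ S ∧ pq.1 ≠ pq.2 := by simpa using hpq
    exact ⟨(hpoly _ hp).sub (hpoly _ hq), sub_ne_zero.2 hne⟩
  refine ⟨P, hP.1, hP.2, fun z hz p hp q hq hpq => ?_⟩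
  by_contra hne
  have hmem : (p, q) ∈ hS.toFinset.offDiag := by simp [hp, hq, hne]
  exact hz ((Finset.prod_apply z _ _).trans (Finset.prod_eq_zero hmem (sub_eq_zero.2 hpq)))

end Algebra

theorem continuous {E : Type*} [AddCommGroup E] [Module ℝ E] [TopologicalSpace E]
    [IsTopologicalAddGroup E] [ContinuousSMul ℝ E] [T2Space E] [FiniteDimensional ℝ E]
    {g : E → ℝ} (hg : IsPolyFun g) : Continuous g := by
  unfold IsPolyFun at hg
  induction hg using Algebra.adjoin_induction with
  | mem f hf => exact (IsLinearMap.mk' f hf).continuous_of_finiteDimensional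
  | algebraMap r => exact continuous_const
  | add f g _ _ ihf ihg => exact ihf.add ihg
  | mul f g _ _ ihf ihg => exact ihf.mul ihg

theorem addHaar_setOf_eq_zero {E : Type*} [NormedAddCommGroup E] [NormedSpace ℝ E]
    [FiniteDimensional ℝ E] [MeasurableSpace E] [BorelSpace E] (μ : Measure E)
    [μ.IsAddHaarMeasure] {g : E → ℝ} (hg : IsPolyFun g) (hg0 : g ≠ 0) :
    μ {z | g z = 0} = 0 := by
  obtain ⟨a, ha⟩ := Function.ne_iff.1 hg0
  have hmeas : MeasurableSet {x : E × ℝ | g (a + x.2 • x.1) ≠ 0} :=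
    (isOpen_ne_fun (hg.continuous.comp (by fun_prop)) continuous_const).measurableSet
  -- `g` has finitely many zeros on each line through `a`, so by Fubini almost every homothety
  -- `x ↦ a + t • x` pulls the zero set of `g` back to a null set; one with `t ≠ 0` suffices.
  have hrays : ∀ᵐ x ∂μ, ∀ᵐ t : ℝ, g (a + t • x) ≠ 0 := .of_forall fun x => by
    simpa [ae_iff] using
      (hg.finite_setOf_line_eq_zero (v := x) (t₀ := 0) (by simpa using ha)).measure_zero volume
  have hdilates : ∀ᵐ t : ℝ, ∀ᵐ x ∂μ, g (a + t • x) ≠ 0 := (Measure.ae_ae_comm hmeas).1 hrays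
  obtain ⟨t, ht, ht0⟩ := (hdilates.and (Measure.ae_ne volume 0)).exists
  have hinverse : Measure.QuasiMeasurePreserving (fun y : E => t⁻¹ • (y - a)) μ μ :=
    (Measure.quasiMeasurePreserving_smul μ (inv_ne_zero ht0)).comp
      (measurePreserving_sub_right μ a).quasiMeasurePreserving
  simpa [ae_iff, smul_inv_smul₀ ht0] using hinverse.ae ht

end IsPolyFun

theorem exists_eventuallyEq_of_injOn_eval {X Y : Type*} [TopologicalSpace X] [TopologicalSpace Y]
    [T2Space Y] {f : X → Y} {S : Set (X → Y)} {z : X} (hS : S.Finite) (hf : ContinuousAt f z)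
    (hcont : ∀ q ∈ S, ContinuousAt q z) (hsel : ∀ᶠ y in 𝓝 z, ∃ q ∈ S, f y = q y)
    (hinj : S.InjOn (Function.eval z)) : ∃ q ∈ S, f =ᶠ[𝓝 z] q := by
  obtain ⟨q, hq, hfq⟩ := hsel.self_of_nhds
  have hother : ∀ᶠ y in 𝓝 z, ∀ p ∈ S, p ≠ q → f y ≠ p y := by
    refine (eventually_all_finite hS).2 fun p hp => eventually_imp_distrib_left.2 fun hpq => ?_
    exact (hf.ne_iff_eventually_ne (hcont p hp)).1 fun hfp => hpq (hinj hp hq (hfp.symm.trans hfq))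
  refine ⟨q, hq, ?_⟩
  filter_upwards [hsel, hother] with y ⟨p, hp, hfp⟩ hy
  by_cases hpq : p = q
  · exact hpq ▸ hfp
  · exact absurd hfp (hy p hp hpq)

/-- The algebra of continuous selections of finitely many polynomial functions on `E`: continuous
functions agreeing at every point with some member of a finite set of polynomial functions. No
structure is imposed on the regions where a given member is selected. -/
def polySelection (E : Type*) [AddCommGroup E] [Module ℝ E] [TopologicalSpace E] :
    Subalgebra ℝ (E → ℝ) where
  carrier := {f | Continuous f ∧
    ∃ S : Set (E → ℝ), S.Finite ∧ (∀ q ∈ S, IsPolyFun q) ∧ ∀ z, ∃ q ∈ S, f z = q z}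
  algebraMap_mem' r := ⟨continuous_const, {algebraMap ℝ _ r}, Set.finite_singleton _,
    fun _ hq => hq ▸ .algebraMap r, fun _ => ⟨_, rfl, rfl⟩⟩
  add_mem' := by
    rintro f g ⟨hf, S, hS, hSpoly, hfS⟩ ⟨hg, T, hT, hTpoly, hgT⟩
    refine ⟨hf.add hg, Set.image2 (· + ·) S T, hS.image2 _ hT, ?_, fun z => ?_⟩
    · rintro _ ⟨p, hp, q, hq, rfl⟩
      exact (hSpoly p hp).add (hTpoly q hq)
    · obtain ⟨p, hp, hfp⟩ := hfS z
      obtain ⟨q, hq, hgq⟩ := hgT z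
      exact ⟨p + q, Set.mem_image2_of_mem hp hq, congrArg₂ (· + ·) hfp hgq⟩
  mul_mem' := by
    rintro f g ⟨hf, S, hS, hSpoly, hfS⟩ ⟨hg, T, hT, hTpoly, hgT⟩
    refine ⟨hf.mul hg, Set.image2 (· * ·) S T, hS.image2 _ hT, ?_, fun z => ?_⟩
    · rintro _ ⟨p, hp, q, hq, rfl⟩
      exact (hSpoly p hp).mul (hTpoly q hq)
    · obtain ⟨p, hp, hfp⟩ := hfS z
      obtain ⟨q, hq, hgq⟩ := hgT z
      exact ⟨p * q, Set.mem_image2_of_mem hp hq, congrArg₂ (· * ·) hfp hgq⟩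

namespace polySelection

theorem sup_mem {E : Type*} [AddCommGroup E] [Module ℝ E] [TopologicalSpace E] {f g : E → ℝ}
    (hf : f ∈ polySelection E) (hg : g ∈ polySelection E) : f ⊔ g ∈ polySelection E := by
  obtain ⟨hf, S, hS, hSpoly, hfS⟩ := hf
  obtain ⟨hg, T, hT, hTpoly, hgT⟩ := hg
  refine ⟨hf.sup hg, S ∪ T, hS.union hT, fun q hq => hq.elim (hSpoly q) (hTpoly q), fun z => ?_⟩
  obtain ⟨p, hp, hfp⟩ := hfS z
  obtain ⟨q, hq, hgq⟩ := hgT z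
  rcases max_choice (f z) (g z) with hmax | hmax
  · exact ⟨p, .inl hp, hmax.trans hfp⟩
  · exact ⟨q, .inr hq, hmax.trans hgq⟩

variable {E : Type*} [AddCommGroup E] [Module ℝ E] [TopologicalSpace E]
  [IsTopologicalAddGroup E] [ContinuousSMul ℝ E] [T2Space E] [FiniteDimensional ℝ E] {f : E → ℝ}

theorem mem_of_isPolyFun (hf : IsPolyFun f) : f ∈ polySelection E :=
  ⟨hf.continuous, {f}, Set.finite_singleton f, fun _ hq => hq ▸ hf, fun _ => ⟨f, rfl, rfl⟩⟩

theorem exists_isPolyFun_forall_eventuallyEq (hf : f ∈ polySelection E) :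
    ∃ P : E → ℝ, IsPolyFun P ∧ P ≠ 0 ∧
      ∀ z, P z ≠ 0 → ∃ Q : E → ℝ, IsPolyFun Q ∧ f =ᶠ[𝓝 z] Q := by
  obtain ⟨hcont, S, hS, hpoly, hsel⟩ := hf
  obtain ⟨P, hP, hP0, hinj⟩ := IsPolyFun.exists_ne_zero_forall_injOn_eval hS hpoly
  refine ⟨P, hP, hP0, fun z hz => ?_⟩
  obtain ⟨Q, hQ, hfQ⟩ := exists_eventuallyEq_of_injOn_eval hS hcont.continuousAt
    (fun q hq => (hpoly q hq).continuous.continuousAt) (.of_forall hsel) (hinj z hz)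
  exact ⟨Q, hpoly Q hQ, hfQ⟩

end polySelection

section Networks

variable {α S : Type*} [SetLike S (α → ℝ)] [NonUnitalSubsemiringClass S (α → ℝ)] {A : S}

theorem dotProduct_mem {ι : Type*} [Fintype ι] {v w : α → ι → ℝ}
    (hv : ∀ i, (fun z => v z i) ∈ A) (hw : ∀ i, (fun z => w z i) ∈ A) :
    (fun z => v z ⬝ᵥ w z) ∈ A := by
  have hsum : ∑ i, (fun z => v z i) * (fun z => w z i) ∈ A :=
    sum_mem fun i _ => mul_mem (hv i) (hw i)
  convert hsum using 1
  ext z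
  simp [dotProduct]

theorem forward_apply_mem (hrelu : ∀ f ∈ A, f ⊔ 0 ∈ A) {d : ℕ → ℕ}
    {W : α → ∀ k, Matrix (Fin (d (k + 1))) (Fin (d k)) ℝ} {b : α → ∀ k, Fin (d (k + 1)) → ℝ}
    {x : α → Fin (d 0) → ℝ} (hW : ∀ k i j, (fun z => W z k i j) ∈ A)
    (hb : ∀ k i, (fun z => b z k i) ∈ A) (hx : ∀ i, (fun z => x z i) ∈ A) (k : ℕ) (i : Fin (d k)) :
    (fun z => forward d (W z) (b z) k (x z) i) ∈ A := by
  induction k with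
  | zero => exact hx i
  | succ k ih => exact hrelu _ (add_mem (dotProduct_mem (hW k i) ih) (hb k i))

end Networks

theorem netFamily_mem_polySelection (d : ℕ → ℕ) (m : ℕ) :
    netFamily d m ∈ polySelection ((Fin (d 0) → ℝ) × ParamSpace d m) := by
  have hlinear {f : (Fin (d 0) → ℝ) × ParamSpace d m → ℝ} (hf : IsLinearMap ℝ f) :
      f ∈ polySelection _ :=
    polySelection.mem_of_isPolyFun (.of_isLinearMap hf)
  have hrelu (f) (hf : f ∈ polySelection ((Fin (d 0) → ℝ) × ParamSpace d m)) :
      f ⊔ 0 ∈ polySelection _ :=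
    polySelection.sup_mem hf (zero_mem _)
  refine add_mem (dotProduct_mem (fun i => hlinear ⟨fun _ _ => rfl, fun _ _ => rfl⟩)
    (forward_apply_mem hrelu (fun k i j => ?_) (fun k i => ?_)
      (fun i => hlinear ⟨fun _ _ => rfl, fun _ _ => rfl⟩) m))
    (hlinear ⟨fun _ _ => rfl, fun _ _ => rfl⟩)
  · by_cases h : k < m
    · simpa [h] using hlinear ⟨fun _ _ => rfl, fun _ _ => rfl⟩
    · simpa [h] using! zero_mem _
  · by_cases h : k < m
    · simpa [h] using hlinear ⟨fun _ _ => rfl, fun _ _ => rfl⟩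
    · simpa [h] using! zero_mem _

instance isAddHaarMeasure_volume_input_prod_paramSpace (d : ℕ → ℕ) (m : ℕ) :
    (volume : Measure ((Fin (d 0) → ℝ) × ParamSpace d m)).IsAddHaarMeasure := by
  have hrows (k : Fin m) :
      (volume : Measure (Fin (d (k.1 + 1)) → Fin (d k.1) → ℝ)).IsAddHaarMeasure :=
    Measure.pi.isAddHaarMeasure _
  have hweights :
      (volume : Measure (∀ k : Fin m, Fin (d (k.1 + 1)) → Fin (d k.1) → ℝ)).IsAddHaarMeasure :=
    Measure.pi.isAddHaarMeasure _
  have hfinal : (volume : Measure ((Fin (d m) → ℝ) × ℝ)).IsAddHaarMeasure :=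
    Measure.prod.instIsAddHaarMeasure _ _
  have hbiases_final : (volume : Measure
      ((∀ k : Fin m, Fin (d (k.1 + 1)) → ℝ) × (Fin (d m) → ℝ) × ℝ)).IsAddHaarMeasure :=
    Measure.prod.instIsAddHaarMeasure _ _
  have hparam : (volume : Measure (ParamSpace d m)).IsAddHaarMeasure :=
    Measure.prod.instIsAddHaarMeasure _ _
  have hmeas : MeasurableAdd (ParamSpace d m) := ContinuousAdd.measurableAdd
  exact Measure.prod.instIsAddHaarMeasure _ _

/-- For a fixed architecture `(n₀,…,n_m,1)` with total parameter count
`D`, there is a nonzero polynomial `P` in the `n₀ + D` variables `(x, s)` such that the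
parametrized family `𝓕 : ℝ^{n₀} × ℝ^D → ℝ` is smooth (locally polynomial) on the
complement of the zero set of `P`; in particular `𝓕` is smooth off a closed Lebesgue
null set. -/
theorem relu_family_smooth_off_algebraic_set (d : ℕ → ℕ) (m : ℕ) :
    ∃ P : (Fin (d 0) → ℝ) × ParamSpace d m → ℝ,
      IsPolyFun P ∧ P ≠ 0 ∧
      IsClosed {z | P z = 0} ∧
      MeasureTheory.volume {z | P z = 0} = 0 ∧
      ∀ z, P z ≠ 0 → ∃ U ∈ nhds z, ∃ Q : (Fin (d 0) → ℝ) × ParamSpace d m → ℝ,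
        IsPolyFun Q ∧ ∀ y ∈ U, netFamily d m y = Q y := by
  obtain ⟨P, hP, hP0, hloc⟩ :=
    polySelection.exists_isPolyFun_forall_eventuallyEq (netFamily_mem_polySelection d m)
  refine ⟨P, hP, hP0, isClosed_eq hP.continuous continuous_const, hP.addHaar_setOf_eq_zero _ hP0,
    fun z hz => ?_⟩
  obtain ⟨Q, hQ, hfQ⟩ := hloc z hz
  exact ⟨_, hfQ, Q, hQ, fun _ hy => hy⟩
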